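/- Let N ≥ 2 be an integer and s ∈ (1/2, 1). Then there exists a constant d = d(N, s) > 0 such that for every radial u ∈ C_c^∞(B) and every x ∈ B with x ≠ 0: u(x)² ≤ d·|x|^{2s−N}·Q_{N,s,B}(u), where B is the open unit ball of ℝ^N. -/

import Mathlib

open MeasureTheory Real Filter Topology Set

noncomputable section

/-- Euclidean space ℝ^N. -/
abbrev Euc (N : ℕ) := EuclideanSpace ℝ (Fin N)

/-- The normalization constant c_{N,s}. -/
def cNs (N : ℕ) (s : ℝ) : ℝ :=
  s * (4 : ℝ) ^ s * Real.Gamma (((N : ℝ) + 2 * s) / 2) /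
    (Real.pi ^ ((N : ℝ) / 2) * Real.Gamma (1 - s))

/-- The Gagliardo quadratic form Q_{N,s,U}. -/
def gagliardo (N : ℕ) (s : ℝ) (U : Set (Euc N)) (u : Euc N → ℝ) : ℝ :=
  (cNs N s / 2) * ∫ x in U, ∫ y in U, (u x - u y) ^ 2 / ‖x - y‖ ^ ((N : ℝ) + 2 * s)

/-- The L^p norm of u on a set U. -/
def lpNormOn (N : ℕ) (p : ℝ) (U : Set (Euc N)) (u : Euc N → ℝ) : ℝ :=
  (∫ x in U, |u x| ^ p) ^ (1 / p)

/-- The fractional critical Sobolev exponent 2*_s = 2N/(N-2s). -/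
def critExp (N : ℕ) (s : ℝ) : ℝ := 2 * (N : ℝ) / ((N : ℝ) - 2 * s)

/-- Smooth compactly supported test function in U. -/
def testFun (N : ℕ) (U : Set (Euc N)) (u : Euc N → ℝ) : Prop :=
  ContDiff ℝ (⊤ : ℕ∞) u ∧ HasCompactSupport u ∧ tsupport u ⊆ U

/-- The critical fractional Sobolev constant S_{N,s}(U). -/
def sobolevConst (N : ℕ) (s : ℝ) (U : Set (Euc N)) : ℝ :=
  sInf { r | ∃ u, testFun N U u ∧ ¬ (∀ x, u x = 0) ∧
    r = gagliardo N s U u / (lpNormOn N (critExp N s) U u) ^ 2 }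

/-- The open cylinder B'_r × (-r, r) in ℝ^{N-1} × ℝ. -/
def cylinder (N : ℕ) (r : ℝ) : Set (EuclideanSpace ℝ (Fin (N - 1)) × ℝ) :=
  (Metric.ball 0 r) ×ˢ (Set.Ioo (-r) r)

/-- A bounded open set is Lipschitz: near each boundary point the boundary is the
bi-Lipschitz image of a flat piece. -/
def IsLipschitzSet (N : ℕ) (Ω : Set (Euc N)) : Prop :=
  ∀ q ∈ frontier Ω, ∃ (r C : ℝ) (Φ : EuclideanSpace ℝ (Fin (N - 1)) × ℝ → Euc N),
    0 < r ∧ 1 < C ∧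
    (∀ x ∈ cylinder N r, ∀ y ∈ cylinder N r,
      C⁻¹ * dist x y ≤ dist (Φ x) (Φ y) ∧ dist (Φ x) (Φ y) ≤ C * dist x y) ∧
    IsOpen (Φ '' cylinder N r) ∧ q ∈ Φ '' cylinder N r ∧
    Φ '' ((Metric.ball 0 r) ×ˢ (Set.Ioo 0 r)) ⊆ Ω ∧
    Φ '' ((Metric.ball 0 r) ×ˢ ({0} : Set ℝ)) ⊆ frontier Ω

/-- Membership in H^s_0(U): approximation by smooth compactly supported functions
in L²(U) and in the Gagliardo form. -/
def memHs0 (N : ℕ) (s : ℝ) (U : Set (Euc N)) (u : Euc N → ℝ) : Prop :=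
  ∃ v : ℕ → Euc N → ℝ, (∀ k, testFun N U (v k)) ∧
    Tendsto (fun k => ∫ x in U, (v k x - u x) ^ 2) atTop (nhds 0) ∧
    Tendsto (fun k => gagliardo N s U (fun x => v k x - u x)) atTop (nhds 0)

/-- A radial function on ℝ^N. -/
def IsRadial (N : ℕ) (u : Euc N → ℝ) : Prop :=
  ∀ x y : Euc N, ‖x‖ = ‖y‖ → u x = u y

/-- The open unit ball of ℝ^N. -/
def unitBall (N : ℕ) : Set (Euc N) := Metric.ball 0 1

/-- The radial critical Sobolev constant S_{N,s,rad}(B,h) on the unit ball. -/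
def sobolevConstRad (N : ℕ) (s : ℝ) (h : Euc N → ℝ) : ℝ :=
  sInf { r | ∃ u, testFun N (unitBall N) u ∧ IsRadial N u ∧ ¬ (∀ x, u x = 0) ∧
    r = (gagliardo N s (unitBall N) u + ∫ x in unitBall N, h x * (u x) ^ 2) /
        (lpNormOn N (critExp N s) (unitBall N) u) ^ 2 }

/-- Membership in H^s_{0,rad}(B): radial, approximated by radial test functions. -/
def memHs0rad (N : ℕ) (s : ℝ) (u : Euc N → ℝ) : Prop :=
  IsRadial N u ∧ ∃ v : ℕ → Euc N → ℝ,
    (∀ k, testFun N (unitBall N) (v k) ∧ IsRadial N (v k)) ∧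
    Tendsto (fun k => ∫ x in unitBall N, (v k x - u x) ^ 2) atTop (nhds 0) ∧
    Tendsto (fun k => gagliardo N s (unitBall N) (fun x => v k x - u x)) atTop (nhds 0)

/-- The fractional Laplacian of a test function. -/
def fracLap (N : ℕ) (s : ℝ) (φ : Euc N → ℝ) (x : Euc N) : ℝ :=
  (cNs N s / 2) * ∫ z : Euc N, (2 * φ x - φ (x + z) - φ (x - z)) / ‖z‖ ^ ((N : ℝ) + 2 * s)

/-
For radial `u`, all the balls `ball q h` with `|q| = |p|` carry the same energy. There is room for
about `(|p| / h)^(N-1)` disjoint ones, so each carries at most a fraction of order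
`(h / |p|)^(N-1)` of the total energy `Q`. Inserting this gain in the comparison of averages over
nested balls, the condition `2s > 1` makes Campanato's telescoping sum converge and gives
`|u(x) - u(y)| ≲ |x|^((1-N)/2) (|y| - |x|)^(s-1/2) √Q` for `|x| < |y|`. Summing over dyadic radii
from `|x|` out to the boundary, where `u` vanishes, yields the bound because `2s < N`.
-/

lemma measureReal_ball_pos {X : Type*} [PseudoMetricSpace X] [MeasurableSpace X] {μ : Measure X}
    [μ.IsOpenPosMeasure] {x : X} {r : ℝ} (hr : 0 < r)
    (hfin : μ (Metric.ball x r) ≠ ⊤ := by finiteness) : 0 < μ.real (Metric.ball x r) :=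
  ENNReal.toReal_pos (Metric.measure_ball_pos μ x hr).ne' hfin

section Averages

variable {α X F : Type*} [NormedAddCommGroup F] [NormedSpace ℝ F] [MeasurableSpace α]

lemma enorm_average_sq_mul_measure_univ_le {μ : Measure α} [IsFiniteMeasure μ] {f : α → F}
    (hf : AEStronglyMeasurable f μ) :
    ‖⨍ x, f x ∂μ‖ₑ ^ 2 * μ univ ≤ ∫⁻ x, ‖f x‖ₑ ^ 2 ∂μ := by
  rcases eq_zero_or_neZero μ with rfl | hμ
  · simp
  have hμ0 : μ univ ≠ 0 := Measure.measure_univ_ne_zero.2 hμ.out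
  have hle : ‖⨍ x, f x ∂μ‖ₑ ≤ eLpNorm f 2 ((μ univ)⁻¹ • μ) :=
    calc ‖⨍ x, f x ∂μ‖ₑ ≤ ∫⁻ x, ‖f x‖ₑ ∂((μ univ)⁻¹ • μ) := enorm_integral_le_lintegral_enorm f
      _ = eLpNorm f 1 ((μ univ)⁻¹ • μ) := eLpNorm_one_eq_lintegral_enorm.symm
      _ ≤ eLpNorm f 2 ((μ univ)⁻¹ • μ) :=
        eLpNorm_le_eLpNorm_of_exponent_le one_le_two (hf.smul_measure _)
  have hsq : eLpNorm f 2 ((μ univ)⁻¹ • μ) ^ 2 = (μ univ)⁻¹ * ∫⁻ x, ‖f x‖ₑ ^ 2 ∂μ := by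
    have h := eLpNorm_nnreal_pow_eq_lintegral (f := f) (μ := (μ univ)⁻¹ • μ) (two_ne_zero)
    simpa using h
  calc ‖⨍ x, f x ∂μ‖ₑ ^ 2 * μ univ ≤ ((μ univ)⁻¹ * ∫⁻ x, ‖f x‖ₑ ^ 2 ∂μ) * μ univ := by
        rw [← hsq]; gcongr
    _ = ∫⁻ x, ‖f x‖ₑ ^ 2 ∂μ := by
        rw [mul_right_comm, ENNReal.inv_mul_cancel hμ0 (measure_ne_top μ univ), one_mul]

variable [CompleteSpace F]

lemma sub_average {μ : Measure α} [IsFiniteMeasure μ] [NeZero μ] {f : α → F}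
    (hf : Integrable f μ) (c : F) : c - ⨍ x, f x ∂μ = ⨍ x, (c - f x) ∂μ := by
  have hf' : Integrable f ((μ univ)⁻¹ • μ) := hf.to_average
  rw [average, average, integral_sub (integrable_const c) hf', integral_const,
    probReal_univ, one_smul]

lemma enorm_sub_setAverage_sq_mul_le {μ : Measure α} {s : Set α} (hs : μ s ≠ ⊤) {f : α → F}
    (hf : IntegrableOn f s μ) (c : F) :
    ‖c - ⨍ x in s, f x ∂μ‖ₑ ^ 2 * μ s ≤ ∫⁻ x in s, ‖c - f x‖ₑ ^ 2 ∂μ := by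
  have : IsFiniteMeasure (μ.restrict s) := isFiniteMeasure_restrict.2 hs
  rcases eq_zero_or_neZero (μ.restrict s) with h0 | _
  · simp [Measure.restrict_eq_zero.1 h0]
  rw [sub_average hf, ← Measure.restrict_apply_univ s]
  exact enorm_average_sq_mul_measure_univ_le (aestronglyMeasurable_const.sub hf.1)

lemma enorm_setAverage_sub_setAverage_sq_mul_le {μ : Measure α} {s t : Set α} (hs : μ s ≠ ⊤)
    (ht : μ t ≠ ⊤) {f : α → F} (hfs : IntegrableOn f s μ) (hft : IntegrableOn f t μ) :
    ‖(⨍ x in s, f x ∂μ) - ⨍ x in t, f x ∂μ‖ₑ ^ 2 * (μ s * μ t) ≤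
      ∫⁻ x in s, ∫⁻ y in t, ‖f x - f y‖ₑ ^ 2 ∂μ ∂μ :=
  calc ‖(⨍ x in s, f x ∂μ) - ⨍ x in t, f x ∂μ‖ₑ ^ 2 * (μ s * μ t)
      = ‖(⨍ x in t, f x ∂μ) - ⨍ x in s, f x ∂μ‖ₑ ^ 2 * μ s * μ t := by
        rw [← mul_assoc, ← enorm_neg, neg_sub]
    _ ≤ (∫⁻ x in s, ‖(⨍ y in t, f y ∂μ) - f x‖ₑ ^ 2 ∂μ) * μ t := by
        gcongr
        exact enorm_sub_setAverage_sq_mul_le hs hfs _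
    _ = ∫⁻ x in s, ‖f x - ⨍ y in t, f y ∂μ‖ₑ ^ 2 * μ t ∂μ := by
        rw [← lintegral_mul_const' _ _ ht]
        simp only [← enorm_neg (_ - f _), neg_sub]
    _ ≤ ∫⁻ x in s, ∫⁻ y in t, ‖f x - f y‖ₑ ^ 2 ∂μ ∂μ :=
        lintegral_mono fun x ↦ enorm_sub_setAverage_sq_mul_le ht hft (f x)

lemma tendsto_setAverage_of_continuousAt {ι : Type*} [TopologicalSpace X] [MeasurableSpace X]
    [OpensMeasurableSpace X] {μ : Measure X} [IsLocallyFiniteMeasure μ] {f : X → F} {x : X}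
    (hf : ContinuousAt f x) (hfm : StronglyMeasurableAtFilter f (𝓝 x) μ) {s : ι → Set X}
    {l : Filter ι} (hs : Tendsto s l (𝓝 x).smallSets) (hs0 : ∀ᶠ i in l, μ.real (s i) ≠ 0) :
    Tendsto (fun i ↦ ⨍ y in s i, f y ∂μ) l (𝓝 (f x)) := by
  have h := (hf.integral_sub_linear_isLittleO_ae hfm hs).tendsto_inv_smul_nhds_zero
  refine (tendsto_sub_nhds_zero_iff.1 (h.congr' ?_))
  filter_upwards [hs0] with i hi
  rw [setAverage_eq, smul_sub, inv_smul_smul₀ hi]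

end Averages

section Telescoping

lemma dist_le_of_dist_le_rpow_of_tendsto {X : Type*} [PseudoMetricSpace X] {f : ℝ → X} {a : X}
    {c t α K : ℝ} (hc : 0 < c) (hcα : c ^ α < 1) (ht : 0 < t)
    (hstep : ∀ k : ℕ, dist (f (c ^ k * t)) (f (c ^ (k + 1) * t)) ≤ K * (c ^ k * t) ^ α)
    (hlim : Tendsto (fun k : ℕ ↦ f (c ^ k * t)) atTop (𝓝 a)) :
    dist (f t) a ≤ K * t ^ α / (1 - c ^ α) := by
  have hgeom (k : ℕ) :
      dist (f (c ^ k * t)) (f (c ^ (k + 1) * t)) ≤ K * t ^ α * (c ^ α) ^ k := by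
    have hpow : (c ^ k * t) ^ α = t ^ α * (c ^ α) ^ k := by
      rw [mul_rpow (by positivity) ht.le, rpow_pow_comm hc.le, mul_comm]
    rw [mul_assoc, ← hpow]
    exact hstep k
  simpa using dist_le_of_le_geometric_of_tendsto₀ (c ^ α) (K * t ^ α) hcα hgeom hlim

lemma norm_le_mul_rpow_of_norm_sub_le {F : Type*} [NormedAddCommGroup F] {f : ℝ → F}
    {γ K R t : ℝ} (hγ : γ < 0) (hf : ∀ r, R ≤ r → f r = 0)
    (hstep : ∀ r, 0 < r → ‖f r - f (2 * r)‖ ≤ K * r ^ γ) (ht : 0 < t) :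
    ‖f t‖ ≤ K * t ^ γ / (1 - 2 ^ γ) := by
  have hlim : Tendsto (fun k : ℕ ↦ f (2 ^ k * t)) atTop (𝓝 0) := by
    have hgrow : Tendsto (fun k : ℕ ↦ (2 : ℝ) ^ k * t) atTop atTop :=
      (tendsto_pow_atTop_atTop_of_one_lt one_lt_two).atTop_mul_const ht
    refine tendsto_const_nhds.congr' ?_
    filter_upwards [hgrow.eventually_ge_atTop R] with k hk using (hf _ hk).symm
  rw [← dist_zero_right]
  refine dist_le_of_dist_le_rpow_of_tendsto two_pos
    (rpow_lt_one_of_one_lt_of_neg one_lt_two hγ) ht (fun k ↦ ?_) hlim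
  rw [dist_eq_norm, pow_succ', mul_assoc]
  exact hstep _ (by positivity)

variable {E F : Type*} [NormedAddCommGroup E] [NormedSpace ℝ E] [NormedAddCommGroup F]
  [NormedSpace ℝ F]

lemma ball_add_smul_subset_ball_add_smul {w : E} (hw : ‖w‖ ≤ 1) (z : E) {r t : ℝ} (hrt : r ≤ t) :
    Metric.ball (z + r • w) r ⊆ Metric.ball (z + t • w) t := by
  apply Metric.ball_subset_ball'
  have hdist : dist (z + r • w) (z + t • w) ≤ t - r := by
    rw [dist_add_left, dist_eq_norm, ← sub_smul, norm_smul, norm_of_nonpos (by linarith)]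
    nlinarith
  linarith

lemma tendsto_ball_add_smul_smallSets {ι : Type*} {l : Filter ι} {r : ι → ℝ}
    (hr : Tendsto r l (𝓝 0)) {w : E} (hw : ‖w‖ ≤ 1) (z : E) :
    Tendsto (fun i ↦ Metric.ball (z + r i • w) (r i)) l (𝓝 z).smallSets := by
  refine Metric.nhds_basis_ball.smallSets.tendsto_right_iff.2 fun ε hε ↦ ?_
  filter_upwards [hr.eventually_lt_const (half_pos hε)] with i hi
  refine (ball_add_smul_subset_ball_add_smul hw z hi.le).trans (Metric.ball_subset_ball' ?_)
  rw [dist_self_add_left, norm_smul, norm_of_nonneg (half_pos hε).le]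
  nlinarith

variable [MeasurableSpace E] [BorelSpace E] [SecondCountableTopology E] [CompleteSpace F]
  {μ : Measure E} [IsLocallyFiniteMeasure μ] [μ.IsOpenPosMeasure]

/- Campanato's argument: the averages over nested balls shrinking to `z` telescope. -/
lemma norm_setAverage_sub_le_of_norm_setAverage_sub_half_le {u : E → F} (hu : Continuous u)
    {z w : E} (hw : ‖w‖ ≤ 1) {H α K : ℝ} (hH : 0 < H) (hα : 0 < α)
    (hfin : μ (Metric.ball (z + H • w) H) ≠ ⊤)
    (hstep : ∀ t ∈ Ioc 0 H, ‖(⨍ x in Metric.ball (z + t • w) t, u x ∂μ) -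
      ⨍ x in Metric.ball (z + (t / 2) • w) (t / 2), u x ∂μ‖ ≤ K * t ^ α) :
    ‖(⨍ x in Metric.ball (z + H • w) H, u x ∂μ) - u z‖ ≤ K * H ^ α / (1 - (1 / 2) ^ α) := by
  have hpos (k : ℕ) : 0 < (1 / 2 : ℝ) ^ k * H := by positivity
  have hle (k : ℕ) : (1 / 2 : ℝ) ^ k * H ≤ H :=
    mul_le_of_le_one_left hH.le (pow_le_one₀ (by norm_num) (by norm_num))
  have hshrink : Tendsto (fun k : ℕ ↦ (1 / 2 : ℝ) ^ k * H) atTop (𝓝 0) := by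
    simpa using (tendsto_pow_atTop_nhds_zero_of_lt_one (r := (1 / 2 : ℝ)) (by norm_num)
      (by norm_num)).mul_const H
  have hball (k : ℕ) :
      μ.real (Metric.ball (z + ((1 / 2 : ℝ) ^ k * H) • w) ((1 / 2 : ℝ) ^ k * H)) ≠ 0 :=
    (measureReal_ball_pos (hpos k)
      (measure_ne_top_of_subset (ball_add_smul_subset_ball_add_smul hw z (hle k)) hfin)).ne'
  rw [← dist_eq_norm]
  refine dist_le_of_dist_le_rpow_of_tendsto
    (f := fun t ↦ ⨍ x in Metric.ball (z + t • w) t, u x ∂μ) (by norm_num)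
    (rpow_lt_one (by norm_num) (by norm_num) hα) hH (fun k ↦ ?_)
    (tendsto_setAverage_of_continuousAt hu.continuousAt
      (hu.stronglyMeasurable.stronglyMeasurableAtFilter)
      (tendsto_ball_add_smul_smallSets hshrink hw z) (Eventually.of_forall hball))
  have hhalf : (1 / 2 : ℝ) ^ (k + 1) * H = (1 / 2) ^ k * H / 2 := by ring
  rw [dist_eq_norm, hhalf]
  exact hstep _ ⟨hpos k, hle k⟩

end Telescoping

section NormedGeometry

lemma enorm_sub_sq_le_ediam_rpow_mul {E F : Type*} [NormedAddCommGroup E] [NormedAddCommGroup F]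
    {U : Set E} (u : E → F) {x y : E} (hx : x ∈ U) (hy : y ∈ U) {σ : ℝ} (hσ : 0 ≤ σ) :
    ‖u x - u y‖ₑ ^ 2 ≤ Metric.ediam U ^ σ * (‖u x - u y‖ₑ ^ 2 / ‖x - y‖ₑ ^ σ) := by
  rcases eq_or_ne x y with rfl | hxy
  · simp
  have hpos : ‖x - y‖ₑ ^ σ ≠ 0 := by simp [ENNReal.rpow_eq_zero_iff, sub_eq_zero, hxy]
  have hfin : ‖x - y‖ₑ ^ σ ≠ ⊤ := ENNReal.rpow_ne_top_of_nonneg hσ enorm_ne_top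
  calc ‖u x - u y‖ₑ ^ 2 = ‖x - y‖ₑ ^ σ * (‖u x - u y‖ₑ ^ 2 / ‖x - y‖ₑ ^ σ) :=
        (ENNReal.mul_div_cancel hpos hfin).symm
    _ ≤ _ := by
        gcongr
        rw [← edist_eq_enorm_sub]
        exact Metric.edist_le_ediam_of_mem hx hy

variable {E : Type*} [NormedAddCommGroup E] [NormedSpace ℝ E]

lemma exists_norm_eq_and_dist_eq {q : E} (hq : q ≠ 0) {a : ℝ} (ha : 0 ≤ a) :
    ∃ p : E, ‖p‖ = a ∧ dist p q = |a - ‖q‖| := by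
  have hq0 : ‖q‖ ≠ 0 := norm_ne_zero_iff.2 hq
  refine ⟨(a / ‖q‖) • q, ?_, ?_⟩
  · rw [norm_smul, norm_of_nonneg (by positivity), div_mul_cancel₀ _ hq0]
  · have hsub : (a / ‖q‖) • q - q = ((a - ‖q‖) / ‖q‖) • q := by
      rw [sub_div, div_self hq0, sub_smul, one_smul]
    rw [dist_eq_norm, hsub, norm_smul, norm_div, norm_norm, div_mul_cancel₀ _ hq0, norm_eq_abs]

lemma ofReal_mul_measure_ball_le_measure_shell [Nontrivial E] [FiniteDimensional ℝ E]
    [MeasurableSpace E] [BorelSpace E] (μ : Measure E) [μ.IsAddHaarMeasure] {a h : ℝ} (ha : 0 < a)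
    (hh : 0 < h) :
    ENNReal.ofReal (h * a ^ (Module.finrank ℝ E - 1)) * μ (Metric.ball 0 1) ≤
      μ (Metric.ball 0 (a + h) \ Metric.closedBall 0 a) := by
  obtain ⟨n, hn⟩ : ∃ n, Module.finrank ℝ E = n + 1 :=
    Nat.exists_eq_succ_of_ne_zero Module.finrank_pos.ne'
  have hle : h * a ^ n ≤ (a + h) ^ (n + 1) - a ^ (n + 1) := by
    have hpow : a ^ n ≤ (a + h) ^ n := by gcongr; linarith
    rw [pow_succ, pow_succ]
    nlinarith
  rw [measure_sdiff (Metric.closedBall_subset_ball (by linarith))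
      measurableSet_closedBall.nullMeasurableSet measure_closedBall_lt_top.ne,
    Measure.addHaar_closedBall_eq_addHaar_ball, Measure.addHaar_ball_of_pos μ 0 ha,
    Measure.addHaar_ball_of_pos μ 0 (by linarith : 0 < a + h), hn, Nat.add_sub_cancel,
    ← ENNReal.sub_mul fun _ _ ↦ measure_ball_lt_top.ne, ← ENNReal.ofReal_sub _ (by positivity)]
  gcongr

end NormedGeometry

section Energy

open Module

variable {E F : Type*} [NormedAddCommGroup E] [InnerProductSpace ℝ E] [FiniteDimensional ℝ E]
  [MeasurableSpace E] [BorelSpace E] [NormedAddCommGroup F]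

/-- The Gagliardo energy `∫_U ∫_U |u(x) - u(y)|² / |x - y|^(d + 2s)` with `d` the dimension of the
space, without the normalization `c_{N,s} / 2`. It takes values in `[0, ∞]`, so that an infinite
energy is not confused with a vanishing one. -/
def gagliardoEnergy (s : ℝ) (U : Set E) (u : E → F) : ENNReal :=
  ∫⁻ x in U, ∫⁻ y in U, ‖u x - u y‖ₑ ^ 2 / ‖x - y‖ₑ ^ (finrank ℝ E + 2 * s)

lemma gagliardoEnergy_mono {s : ℝ} {U V : Set E} (hUV : U ⊆ V) (u : E → F) :
    gagliardoEnergy s U u ≤ gagliardoEnergy s V u :=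
  (lintegral_mono_set hUV).trans (lintegral_mono fun _ ↦ lintegral_mono_set hUV)

lemma gagliardoEnergy_preimage_linearIsometryEquiv (s : ℝ) (U : Set E) (u : E → F)
    (T : E ≃ₗᵢ[ℝ] E) : gagliardoEnergy s (T ⁻¹' U) (u ∘ T) = gagliardoEnergy s U u := by
  have hT : MeasurableEmbedding T := T.toHomeomorph.measurableEmbedding
  have hint (f : E → ENNReal) : ∫⁻ x in T ⁻¹' U, f (T x) = ∫⁻ x in U, f x :=
    T.measurePreserving.setLIntegral_comp_preimage_emb hT f U
  simp only [gagliardoEnergy, ← hint, Function.comp_apply, ← map_sub, LinearIsometryEquiv.enorm_map]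

lemma gagliardoEnergy_ball_congr_of_radial {u : E → F} (hu : ∀ x y, ‖x‖ = ‖y‖ → u x = u y)
    (s : ℝ) {p q : E} (hpq : ‖p‖ = ‖q‖) (r : ℝ) :
    gagliardoEnergy s (Metric.ball p r) u = gagliardoEnergy s (Metric.ball q r) u := by
  obtain ⟨T, hT⟩ : ∃ T : E ≃ₗᵢ[ℝ] E, T p = q := ⟨_, Submodule.reflection_sub hpq⟩
  have huT : u ∘ T = u := funext fun x ↦ hu _ _ (T.norm_map x)
  have hball : T ⁻¹' Metric.ball q r = Metric.ball p r := by
    rw [← hT, T.isometry.preimage_ball]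
  rw [← gagliardoEnergy_preimage_linearIsometryEquiv s (Metric.ball q r) u T, huT, hball]

lemma measurable_gagliardoKernel {u : E → F} (hu : Continuous u) (s : ℝ) :
    Measurable (fun z : E × E ↦
      ‖u z.1 - u z.2‖ₑ ^ 2 / ‖z.1 - z.2‖ₑ ^ (finrank ℝ E + 2 * s)) := by
  have hnum : Continuous fun z : E × E ↦ ‖u z.1 - u z.2‖ₑ := by fun_prop
  have hden : Continuous fun z : E × E ↦ ‖z.1 - z.2‖ₑ := by fun_prop
  exact (hnum.measurable.pow_const 2).div (hden.measurable.pow_const _)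

lemma lintegral_gagliardoEnergy_inter_ball_le {u : E → F} (hu : Continuous u) (s : ℝ) (U : Set E)
    (r : ℝ) : ∫⁻ q, gagliardoEnergy s (Metric.ball q r ∩ U) u ≤
      volume (Metric.ball (0 : E) r) * gagliardoEnergy s U u := by
  set G : E → ENNReal := fun x ↦
    ∫⁻ y in U, ‖u x - u y‖ₑ ^ 2 / ‖x - y‖ₑ ^ (finrank ℝ E + 2 * s)
  have hGmeas : Measurable G := (measurable_gagliardoKernel hu s).lintegral_prod_right'
  have hmeas : Measurable fun z : E × E ↦ (Metric.ball z.1 r).indicator G z.2 :=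
    (hGmeas.comp measurable_snd).indicator (s := {z : E × E | dist z.2 z.1 < r})
      (measurableSet_lt (by fun_prop) measurable_const)
  have hlocal (q : E) : gagliardoEnergy s (Metric.ball q r ∩ U) u ≤
      ∫⁻ x in U, (Metric.ball q r).indicator G x := by
    rw [lintegral_indicator measurableSet_ball, Measure.restrict_restrict measurableSet_ball]
    exact lintegral_mono fun x ↦ lintegral_mono_set inter_subset_right
  calc ∫⁻ q, gagliardoEnergy s (Metric.ball q r ∩ U) u
      ≤ ∫⁻ q, ∫⁻ x in U, (Metric.ball q r).indicator G x := lintegral_mono hlocal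
    _ = ∫⁻ x in U, ∫⁻ q, (Metric.ball q r).indicator G x :=
        lintegral_lintegral_swap hmeas.aemeasurable
    _ = ∫⁻ x in U, volume (Metric.ball (0 : E) r) * G x := by
        refine lintegral_congr fun x ↦ ?_
        have hsymm : (fun q ↦ (Metric.ball q r).indicator G x) =
            (Metric.ball x r).indicator fun _ ↦ G x := by
          ext q; simp only [indicator, Metric.mem_ball, dist_comm]
        rw [hsymm, lintegral_indicator measurableSet_ball, setLIntegral_const,
          Measure.addHaar_ball_center, mul_comm]
    _ = volume (Metric.ball (0 : E) r) * gagliardoEnergy s U u :=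
        lintegral_const_mul' _ _ measure_ball_lt_top.ne

/- Every point `q` of the shell `‖p‖ < ‖q‖ < ‖p‖ + h` is at distance less than `h` from a rotated
copy of `p`, and all the rotated copies of `ball p h` carry the same energy. -/
lemma gagliardoEnergy_ball_mul_measure_shell_le {u : E → F} (hu : Continuous u)
    (hrad : ∀ x y, ‖x‖ = ‖y‖ → u x = u y) (s : ℝ) {p : E} {h R : ℝ} (hR : ‖p‖ + h ≤ R) :
    gagliardoEnergy s (Metric.ball p h) u *
        volume (Metric.ball (0 : E) (‖p‖ + h) \ Metric.closedBall 0 ‖p‖) ≤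
      volume (Metric.ball (0 : E) (2 * h)) * gagliardoEnergy s (Metric.ball 0 R) u := by
  set S := Metric.ball (0 : E) (‖p‖ + h) \ Metric.closedBall 0 ‖p‖
  set B := Metric.ball (0 : E) R
  have hcopy (q : E) (hq : q ∈ S) : gagliardoEnergy s (Metric.ball p h) u ≤
      gagliardoEnergy s (Metric.ball q (2 * h) ∩ B) u := by
    obtain ⟨hqlt, hqgt⟩ : ‖q‖ < ‖p‖ + h ∧ ‖p‖ < ‖q‖ := by simpa [S] using hq
    have hq0 : q ≠ 0 := norm_pos_iff.1 ((norm_nonneg p).trans_lt hqgt)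
    obtain ⟨p', hnorm, hdist⟩ := exists_norm_eq_and_dist_eq hq0 (norm_nonneg p)
    rw [abs_of_nonpos (by linarith)] at hdist
    rw [gagliardoEnergy_ball_congr_of_radial hrad s hnorm.symm]
    refine gagliardoEnergy_mono (subset_inter ?_ ?_) u <;> apply Metric.ball_subset_ball'
    · linarith
    · rw [dist_zero_right]; linarith
  calc gagliardoEnergy s (Metric.ball p h) u * volume S
      = ∫⁻ _ in S, gagliardoEnergy s (Metric.ball p h) u := (setLIntegral_const _ _).symm
    _ ≤ ∫⁻ q in S, gagliardoEnergy s (Metric.ball q (2 * h) ∩ B) u :=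
        setLIntegral_mono' (measurableSet_ball.diff measurableSet_closedBall) hcopy
    _ ≤ ∫⁻ q, gagliardoEnergy s (Metric.ball q (2 * h) ∩ B) u := setLIntegral_le_lintegral _ _
    _ ≤ volume (Metric.ball (0 : E) (2 * h)) * gagliardoEnergy s B u :=
        lintegral_gagliardoEnergy_inter_ball_le hu s B _

lemma gagliardoEnergy_ball_le_of_radial {u : E → F} (hu : Continuous u)
    (hrad : ∀ x y, ‖x‖ = ‖y‖ → u x = u y) (s : ℝ) {p : E} (hp : p ≠ 0) {h R : ℝ} (hh : 0 < h)
    (hR : ‖p‖ + h ≤ R) :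
    gagliardoEnergy s (Metric.ball p h) u ≤
      ENNReal.ofReal (2 ^ finrank ℝ E * (h / ‖p‖) ^ (finrank ℝ E - 1)) *
        gagliardoEnergy s (Metric.ball 0 R) u := by
  have : Nontrivial E := ⟨p, 0, hp⟩
  obtain ⟨n, hn⟩ : ∃ n, finrank ℝ E = n + 1 := Nat.exists_eq_succ_of_ne_zero finrank_pos.ne'
  have hp0 : 0 < ‖p‖ := norm_pos_iff.2 hp
  have hshell := ofReal_mul_measure_ball_le_measure_shell (volume : Measure E) hp0 hh
  have henergy := gagliardoEnergy_ball_mul_measure_shell_le hu hrad s hR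
  rw [Measure.addHaar_ball_of_pos _ _ (by positivity : 0 < 2 * h)] at henergy
  simp only [hn, Nat.add_sub_cancel] at hshell henergy ⊢
  set m := ENNReal.ofReal (h * ‖p‖ ^ n) * volume (Metric.ball (0 : E) 1)
  have hm0 : m ≠ 0 := mul_ne_zero (ENNReal.ofReal_pos.2 (by positivity)).ne'
    (Metric.measure_ball_pos _ _ one_pos).ne'
  have hmtop : m ≠ ⊤ := ENNReal.mul_ne_top ENNReal.ofReal_ne_top measure_ball_lt_top.ne
  have hratio : (2 * h) ^ (n + 1) = 2 ^ (n + 1) * (h / ‖p‖) ^ n * (h * ‖p‖ ^ n) := by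
    rw [div_pow]; field_simp; ring
  rw [hratio, ENNReal.ofReal_mul (by positivity)] at henergy
  rw [← ENNReal.mul_le_mul_iff_left hm0 hmtop]
  calc gagliardoEnergy s (Metric.ball p h) u * m
      ≤ _ := (mul_le_mul_right hshell _).trans henergy
    _ = _ := by ring

variable [NormedSpace ℝ F] [CompleteSpace F]

lemma enorm_setAverage_sub_setAverage_sq_mul_le_gagliardoEnergy {u : E → F} (hu : Continuous u)
    {s : ℝ} (hs : 0 ≤ s) {U V : Set E} (hU : Bornology.IsBounded U) (hUm : MeasurableSet U)
    (hVU : V ⊆ U) :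
    ‖(⨍ x in U, u x) - ⨍ x in V, u x‖ₑ ^ 2 * (volume U * volume V) ≤
      Metric.ediam U ^ (finrank ℝ E + 2 * s) * gagliardoEnergy s U u := by
  have hint : IntegrableOn u U :=
    (hu.continuousOn.integrableOn_compact hU.isCompact_closure).mono_set subset_closure
  have hdiam : Metric.ediam U ^ (finrank ℝ E + 2 * s) ≠ ⊤ :=
    ENNReal.rpow_ne_top_of_nonneg (by positivity) hU.ediam_ne_top
  calc ‖(⨍ x in U, u x) - ⨍ x in V, u x‖ₑ ^ 2 * (volume U * volume V)
      ≤ ∫⁻ x in U, ∫⁻ y in V, ‖u x - u y‖ₑ ^ 2 :=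
        enorm_setAverage_sub_setAverage_sq_mul_le hU.measure_lt_top.ne
          (hU.subset hVU).measure_lt_top.ne hint (hint.mono_set hVU)
    _ ≤ ∫⁻ x in U, ∫⁻ y in U, ‖u x - u y‖ₑ ^ 2 := lintegral_mono fun _ ↦ lintegral_mono_set hVU
    _ ≤ ∫⁻ x in U, ∫⁻ y in U, Metric.ediam U ^ (finrank ℝ E + 2 * s) *
          (‖u x - u y‖ₑ ^ 2 / ‖x - y‖ₑ ^ (finrank ℝ E + 2 * s)) :=
        setLIntegral_mono' hUm fun x hx ↦ setLIntegral_mono' hUm fun y hy ↦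
          enorm_sub_sq_le_ediam_rpow_mul u hx hy (by positivity)
    _ = Metric.ediam U ^ (finrank ℝ E + 2 * s) * gagliardoEnergy s U u := by
        simp only [gagliardoEnergy, lintegral_const_mul' _ _ hdiam]

end Energy

section RadialEstimates

open Module

variable {E F : Type*} [NormedAddCommGroup E] [InnerProductSpace ℝ E] [FiniteDimensional ℝ E]
  [MeasurableSpace E] [BorelSpace E] [NormedAddCommGroup F] [NormedSpace ℝ F] [CompleteSpace F]

variable (E) in
/-- The constant with which the averages of a radial function over two nested balls, one of radius
half that of the other, are compared in `norm_setAverage_ball_sub_setAverage_ball_half_le`. -/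
def nestedBallConst (s : ℝ) : ℝ :=
  2 ^ ((3 * finrank ℝ E + 2 * s) / 2) / volume.real (Metric.ball (0 : E) 1)

variable (E) in
lemma nestedBallConst_pos (s : ℝ) : 0 < nestedBallConst E s :=
  div_pos (by positivity) (measureReal_ball_pos one_pos)

variable (E) in
lemma nestedBallConst_scaling [Nontrivial E] (s : ℝ) {a h : ℝ} (ha : 0 < a) (hh : 0 < h) :
    (2 * h) ^ (finrank ℝ E + 2 * s) *
        (2 ^ finrank ℝ E * (h / a) ^ (finrank ℝ E - 1)) =
      (nestedBallConst E s * a ^ ((1 - finrank ℝ E : ℝ) / 2) * h ^ (s - 1 / 2)) ^ 2 *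
        (volume.real (Metric.ball (0 : E) h) * volume.real (Metric.ball (0 : E) (h / 2))) := by
  obtain ⟨n, hn⟩ : ∃ n, finrank ℝ E = n + 1 := Nat.exists_eq_succ_of_ne_zero finrank_pos.ne'
  have hω : volume.real (Metric.ball (0 : E) 1) ≠ 0 :=
    (measureReal_ball_pos one_pos).ne'
  have htwo : ((2 : ℝ) ^ ((3 * finrank ℝ E + 2 * s) / 2)) ^ 2 =
      (2 ^ (n + 1)) ^ 3 * 2 ^ (2 * s) := by
    rw [← rpow_mul_natCast two_pos.le, ← pow_mul, ← rpow_natCast, ← rpow_add two_pos, hn]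
    push_cast; ring_nf
  have ha' : (a ^ ((1 - finrank ℝ E : ℝ) / 2)) ^ 2 = (a ^ n)⁻¹ := by
    rw [← rpow_mul_natCast ha.le, ← rpow_natCast, ← rpow_neg ha.le, hn]
    push_cast; ring_nf
  have hh' : (h ^ (s - 1 / 2)) ^ 2 = h ^ (2 * s) / h := by
    rw [← rpow_mul_natCast hh.le, ← rpow_sub_one hh.ne']
    push_cast; ring_nf
  have hscale : (2 * h) ^ (finrank ℝ E + 2 * s) =
      (2 * h) ^ (n + 1) * (2 ^ (2 * s) * h ^ (2 * s)) := by
    rw [← mul_rpow two_pos.le hh.le, ← rpow_natCast, ← rpow_add (by positivity), hn]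
  have hball {r : ℝ} (hr : 0 < r) : volume.real (Metric.ball (0 : E) r) =
      r ^ (n + 1) * volume.real (Metric.ball (0 : E) 1) := by
    rw [measureReal_def, Measure.addHaar_ball_of_pos _ _ hr, ENNReal.toReal_mul,
      ENNReal.toReal_ofReal (by positivity), hn, measureReal_def]
  rw [nestedBallConst, mul_pow, mul_pow, div_pow (2 ^ _) (volume.real _), htwo, ha', hh',
    hscale, hball hh, hball (half_pos hh), hn, Nat.add_sub_cancel, div_pow, div_pow, mul_pow]
  field_simp
  ring

lemma norm_setAverage_ball_sub_setAverage_ball_half_le {u : E → F} (hu : Continuous u)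
    (hrad : ∀ x y, ‖x‖ = ‖y‖ → u x = u y) {s : ℝ} (hs : 0 ≤ s) {R : ℝ}
    (hfin : gagliardoEnergy s (Metric.ball (0 : E) R) u ≠ ⊤) {p p' : E} (hp : p ≠ 0) {h : ℝ}
    (hh : 0 < h) (hR : ‖p‖ + h ≤ R)
    (hsub : Metric.ball p' (h / 2) ⊆ Metric.ball p h) :
    ‖(⨍ x in Metric.ball p h, u x) - ⨍ x in Metric.ball p' (h / 2), u x‖ ≤
      nestedBallConst E s * ‖p‖ ^ ((1 - finrank ℝ E : ℝ) / 2) * h ^ (s - 1 / 2) *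
        √(gagliardoEnergy s (Metric.ball (0 : E) R) u).toReal := by
  have : Nontrivial E := ⟨p, 0, hp⟩
  set δ := (⨍ x in Metric.ball p h, u x) - ⨍ x in Metric.ball p' (h / 2), u x
  set Q := gagliardoEnergy s (Metric.ball (0 : E) R) u
  have hdiam : Metric.ediam (Metric.ball p h) ≤ ENNReal.ofReal (2 * h) := by
    rw [← Metric.eball_ofReal, ENNReal.ofReal_mul two_pos.le, ENNReal.ofReal_ofNat]
    exact Metric.ediam_eball_le
  have henn : ‖δ‖ₑ ^ 2 * (volume (Metric.ball p h) * volume (Metric.ball p' (h / 2))) ≤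
      ENNReal.ofReal (2 * h) ^ (finrank ℝ E + 2 * s) *
        (ENNReal.ofReal (2 ^ finrank ℝ E * (h / ‖p‖) ^ (finrank ℝ E - 1)) * Q) := by
    refine (enorm_setAverage_sub_setAverage_sq_mul_le_gagliardoEnergy hu hs Metric.isBounded_ball
      measurableSet_ball hsub).trans ?_
    gcongr
    exact gagliardoEnergy_ball_le_of_radial hu hrad s hp hh hR
  have hreal : ‖δ‖ ^ 2 * (volume.real (Metric.ball (0 : E) h) *
      volume.real (Metric.ball (0 : E) (h / 2))) ≤ (2 * h) ^ (finrank ℝ E + 2 * s) *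
        (2 ^ finrank ℝ E * (h / ‖p‖) ^ (finrank ℝ E - 1)) * Q.toReal := by
    have hratio : 0 ≤ (h / ‖p‖) ^ (finrank ℝ E - 1) := by positivity
    simpa [ENNReal.toReal_mul, ← ENNReal.toReal_rpow, ENNReal.toReal_ofReal hratio,
      Measure.addHaar_ball_center, hh.le, measureReal_def, mul_assoc]
      using ENNReal.toReal_mono (by finiteness) henn
  have hconst := (nestedBallConst_pos E s).le
  refine le_of_sq_le_sq ?_ (by positivity)
  rw [nestedBallConst_scaling E s (norm_pos_iff.2 hp) hh, mul_right_comm] at hreal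
  rw [mul_pow _ (√_), sq_sqrt ENNReal.toReal_nonneg]
  exact le_of_mul_le_mul_right hreal
    (mul_pos (measureReal_ball_pos hh) (measureReal_ball_pos (half_pos hh)))

lemma norm_setAverage_ball_sub_le_of_radial {u : E → F} (hu : Continuous u)
    (hrad : ∀ x y, ‖x‖ = ‖y‖ → u x = u y) {s : ℝ} (hs : 1 / 2 < s) {R : ℝ}
    (hfin : gagliardoEnergy s (Metric.ball (0 : E) R) u ≠ ⊤) {z w : E} (hw : ‖w‖ ≤ 1) {b H : ℝ}
    (hb : 0 < b) (hH : 0 < H) (hlow : ∀ t ∈ Ioc 0 H, b ≤ ‖z + t • w‖)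
    (hup : ∀ t ∈ Ioc 0 H, ‖z + t • w‖ + t ≤ R) :
    ‖(⨍ x in Metric.ball (z + H • w) H, u x) - u z‖ ≤
      nestedBallConst E s * b ^ ((1 - finrank ℝ E : ℝ) / 2) *
        √(gagliardoEnergy s (Metric.ball (0 : E) R) u).toReal * H ^ (s - 1 / 2) /
          (1 - (1 / 2) ^ (s - 1 / 2)) := by
  refine norm_setAverage_sub_le_of_norm_setAverage_sub_half_le hu hw hH (sub_pos.2 hs)
    measure_ball_lt_top.ne fun t ht ↦ ?_
  have hz : z + t • w ≠ 0 := norm_pos_iff.1 (hb.trans_le (hlow t ht))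
  have : Nontrivial E := ⟨_, 0, hz⟩
  have hdim : (1 : ℝ) ≤ finrank ℝ E := by exact_mod_cast finrank_pos (R := ℝ) (M := E)
  have hpow : ‖z + t • w‖ ^ ((1 - finrank ℝ E : ℝ) / 2) ≤ b ^ ((1 - finrank ℝ E : ℝ) / 2) :=
    rpow_le_rpow_of_nonpos hb (hlow t ht) (by linarith)
  have hconst := (nestedBallConst_pos E s).le
  have hpow_t : 0 ≤ t ^ (s - 1 / 2) := rpow_nonneg ht.1.le _
  refine (norm_setAverage_ball_sub_setAverage_ball_half_le hu hrad (by linarith) hfin hz ht.1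
    (hup t ht) (ball_add_smul_subset_ball_add_smul hw z (by linarith [ht.1]))).trans ?_
  rw [mul_right_comm]
  gcongr

variable (E) in
/-- The constant of the Hölder estimate `norm_sub_le_of_radial` for radial functions. -/
def radialHolderConst (s : ℝ) : ℝ :=
  2 * nestedBallConst E s / (1 - (1 / 2) ^ (s - 1 / 2))

variable (E) in
lemma radialHolderConst_pos {s : ℝ} (hs : 1 / 2 < s) : 0 < radialHolderConst E s :=
  div_pos (mul_pos two_pos (nestedBallConst_pos E s))
    (sub_pos.2 (rpow_lt_one (by norm_num) (by norm_num) (sub_pos.2 hs)))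

/- Compare both values with the average over the ball that has the segment between the two points
as a diameter. -/
lemma norm_sub_le_of_radial {u : E → F} (hu : Continuous u)
    (hrad : ∀ x y, ‖x‖ = ‖y‖ → u x = u y) {s : ℝ} (hs : 1 / 2 < s) {R : ℝ}
    (hfin : gagliardoEnergy s (Metric.ball (0 : E) R) u ≠ ⊤) {e : E} (he : ‖e‖ = 1) {a b : ℝ}
    (hb : 0 < b) (hab : b < a) (haR : a ≤ R) :
    ‖u (b • e) - u (a • e)‖ ≤ radialHolderConst E s * b ^ ((1 - finrank ℝ E : ℝ) / 2) *
      (a - b) ^ (s - 1 / 2) * √(gagliardoEnergy s (Metric.ball (0 : E) R) u).toReal := by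
  set H := (a - b) / 2 with hH
  have hH0 : 0 < H := half_pos (sub_pos.2 hab)
  have hnorm (t : ℝ) (ht : 0 ≤ t) : ‖t • e‖ = t := by
    rw [norm_smul, he, mul_one, norm_of_nonneg ht]
  have hin (t : ℝ) : b • e + t • e = (b + t) • e := (add_smul _ _ _).symm
  have hout (t : ℝ) : a • e + t • -e = (a - t) • e := by rw [smul_neg, ← sub_eq_add_neg, sub_smul]
  have hinner := norm_setAverage_ball_sub_le_of_radial hu hrad hs hfin he.le (z := b • e) hb hH0
    (fun t ht ↦ by rw [hin, hnorm _ (by linarith [ht.1])]; linarith [ht.1])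
    (fun t ht ↦ by rw [hin, hnorm _ (by linarith [ht.1])]; linarith [ht.2])
  have houter := norm_setAverage_ball_sub_le_of_radial hu hrad hs hfin (norm_neg e ▸ he.le)
    (z := a • e) hb hH0
    (fun t ht ↦ by rw [hout, hnorm _ (by linarith [ht.2])]; linarith [ht.2])
    (fun t ht ↦ by rw [hout, hnorm _ (by linarith [ht.2])]; linarith)
  have hcenter : b • e + H • e = a • e + H • -e := by
    rw [hin, hout, hH]; congr 1; ring
  rw [← hcenter] at houter
  have hscale : H ^ (s - 1 / 2) ≤ (a - b) ^ (s - 1 / 2) :=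
    rpow_le_rpow hH0.le (by linarith) (by linarith)
  have hconst := (radialHolderConst_pos E hs).le
  rw [← dist_eq_norm]
  rw [← dist_eq_norm] at hinner houter
  calc dist (u (b • e)) (u (a • e)) ≤ _ := dist_triangle_left _ _ _
    _ ≤ _ := add_le_add hinner houter
    _ = radialHolderConst E s * b ^ ((1 - finrank ℝ E : ℝ) / 2) * H ^ (s - 1 / 2) *
          √(gagliardoEnergy s (Metric.ball (0 : E) R) u).toReal := by
        rw [radialHolderConst]; ring
    _ ≤ _ := by gcongr

lemma norm_smul_sub_two_mul_smul_le_of_radial {u : E → F} (hu : Continuous u)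
    (hrad : ∀ x y, ‖x‖ = ‖y‖ → u x = u y) {s : ℝ} (hs : 1 / 2 < s) {R : ℝ}
    (hfin : gagliardoEnergy s (Metric.ball (0 : E) R) u ≠ ⊤) {e : E} (he : ‖e‖ = 1)
    (hzero : ∀ r, R ≤ r → u (r • e) = 0) {r : ℝ} (hr : 0 < r) :
    ‖u (r • e) - u ((2 * r) • e)‖ ≤ radialHolderConst E s *
      √(gagliardoEnergy s (Metric.ball (0 : E) R) u).toReal * r ^ (s - finrank ℝ E / 2) := by
  have hconst := (radialHolderConst_pos E hs).le
  rcases le_or_gt R r with hRr | hrR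
  · rw [hzero r hRr, hzero (2 * r) (by linarith), sub_zero, norm_zero]
    positivity
  have hmin : u ((2 * r) • e) = u (min (2 * r) R • e) := by
    rcases le_total (2 * r) R with hle | hge
    · rw [min_eq_left hle]
    · rw [min_eq_right hge, hzero _ hge, hzero _ le_rfl]
  have hlt : r < min (2 * r) R := lt_min (by linarith) hrR
  have hgap : (min (2 * r) R - r) ^ (s - 1 / 2) ≤ r ^ (s - 1 / 2) :=
    rpow_le_rpow (by linarith) (by linarith [min_le_left (2 * r) R]) (by linarith)
  have hexp : r ^ (s - finrank ℝ E / 2) =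
      r ^ ((1 - finrank ℝ E : ℝ) / 2) * r ^ (s - 1 / 2) := by
    rw [← rpow_add hr]; ring_nf
  rw [hmin, hexp, mul_right_comm, ← mul_assoc (radialHolderConst E s)]
  refine (norm_sub_le_of_radial hu hrad hs hfin he hr hlt (min_le_right _ _)).trans ?_
  gcongr

lemma norm_le_mul_rpow_of_radial {u : E → F} (hu : Continuous u)
    (hrad : ∀ x y, ‖x‖ = ‖y‖ → u x = u y) {s : ℝ} (hs : 1 / 2 < s) (hsE : s < finrank ℝ E / 2)
    {R : ℝ} (hsupp : ∀ x ∉ Metric.ball (0 : E) R, u x = 0)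
    (hfin : gagliardoEnergy s (Metric.ball (0 : E) R) u ≠ ⊤) {x : E} (hx : x ≠ 0) :
    ‖u x‖ ≤ radialHolderConst E s * √(gagliardoEnergy s (Metric.ball (0 : E) R) u).toReal *
      ‖x‖ ^ (s - finrank ℝ E / 2) / (1 - 2 ^ (s - finrank ℝ E / 2)) := by
  set e := ‖x‖⁻¹ • x
  have he : ‖e‖ = 1 := norm_smul_inv_norm hx
  have hxe : ‖x‖ • e = x := smul_inv_smul₀ (norm_ne_zero_iff.2 hx) x
  have hzero (r : ℝ) (hr : R ≤ r) : u (r • e) = 0 := hsupp _ <| by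
    rw [mem_ball_zero_iff, norm_smul, he, mul_one, not_lt]
    exact hr.trans (le_abs_self r)
  have hbound := norm_le_mul_rpow_of_norm_sub_le (f := fun r ↦ u (r • e)) (sub_neg.2 hsE) hzero
    (fun r hr ↦ norm_smul_sub_two_mul_smul_le_of_radial hu hrad hs hfin he hzero hr)
    (norm_pos_iff.2 hx)
  rwa [hxe] at hbound

end RadialEstimates

section FiniteEnergy

open Module

lemma enorm_sub_sq_div_le_of_lipschitzWith {E F : Type*} [NormedAddCommGroup E]
    [NormedAddCommGroup F] {u : E → F} {K : NNReal} (hu : LipschitzWith K u) (σ : ℝ) (x y : E) :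
    ‖u x - u y‖ₑ ^ 2 / ‖x - y‖ₑ ^ σ ≤ K ^ 2 * ‖x - y‖ₑ ^ (2 - σ) := by
  rcases eq_or_ne x y with rfl | hxy
  · simp
  have hpos : ‖x - y‖ₑ ≠ 0 := enorm_ne_zero.2 (sub_ne_zero.2 hxy)
  have hlip : ‖u x - u y‖ₑ ≤ K * ‖x - y‖ₑ := by simpa only [edist_eq_enorm_sub] using hu x y
  calc ‖u x - u y‖ₑ ^ 2 / ‖x - y‖ₑ ^ σ ≤ (K * ‖x - y‖ₑ) ^ 2 / ‖x - y‖ₑ ^ σ := by gcongr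
    _ = K ^ 2 * ‖x - y‖ₑ ^ (2 - σ) := by
        rw [ENNReal.rpow_sub _ _ hpos enorm_ne_top, ENNReal.rpow_two, mul_pow, mul_div_assoc]

lemma setLIntegral_ball_enorm_rpow_lt_top {E : Type*} [NormedAddCommGroup E] [NormedSpace ℝ E]
    [Nontrivial E] [FiniteDimensional ℝ E] [MeasurableSpace E] [BorelSpace E] (μ : Measure E)
    [μ.IsAddHaarMeasure] {β : ℝ} (hβ : -finrank ℝ E < β) (r : ℝ) :
    ∫⁻ z in Metric.ball (0 : E) r, ‖z‖ₑ ^ β ∂μ < ⊤ := by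
  have hint : IntegrableOn (fun z : E ↦ ‖z‖ ^ β) (Metric.ball 0 r) μ :=
    integrableOn_ball_of_norm_le_rpow (α := -β) (C := 1) finrank_pos (by linarith)
      (Eventually.of_forall fun z ↦ by
        rw [norm_of_nonneg (by positivity), neg_neg, one_mul])
      (measurable_norm.pow_const β).aestronglyMeasurable
  refine (lintegral_congr_ae (ae_restrict_of_ae ?_)).trans_lt hint.2
  filter_upwards [Measure.ae_ne μ 0] with z hz
  have hz0 : 0 < ‖z‖ := norm_pos_iff.2 hz
  rw [← ofReal_norm, ENNReal.ofReal_rpow_of_pos hz0, enorm_of_nonneg (by positivity)]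

variable {E F : Type*} [NormedAddCommGroup E] [InnerProductSpace ℝ E] [FiniteDimensional ℝ E]
  [MeasurableSpace E] [BorelSpace E] [NormedAddCommGroup F]

lemma gagliardoEnergy_ne_top_of_lipschitzWith [Nontrivial E] {u : E → F} {K : NNReal}
    (hu : LipschitzWith K u) {s : ℝ} (hs : s < 1) {U : Set E} (hU : Bornology.IsBounded U)
    (hUm : MeasurableSet U) : gagliardoEnergy s U u ≠ ⊤ := by
  set β : ℝ := 2 - (finrank ℝ E + 2 * s)
  obtain ⟨r, hr⟩ := Metric.isBounded_iff.1 hU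
  set I := ∫⁻ z in Metric.ball (0 : E) (r + 1), ‖z‖ₑ ^ β
  have hI : I < ⊤ := setLIntegral_ball_enorm_rpow_lt_top volume (by linarith) _
  have hinner (x : E) (hx : x ∈ U) : ∫⁻ y in U, ‖x - y‖ₑ ^ β ≤ I :=
    calc ∫⁻ y in U, ‖x - y‖ₑ ^ β
        ≤ ∫⁻ y in U, (Metric.ball 0 (r + 1)).indicator (fun z ↦ ‖z‖ₑ ^ β) (x - y) :=
          setLIntegral_mono' hUm fun y hy ↦ by
            rw [indicator_of_mem]
            rw [mem_ball_zero_iff, ← dist_eq_norm]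
            linarith [hr hx hy]
      _ ≤ ∫⁻ y, (Metric.ball 0 (r + 1)).indicator (fun z ↦ ‖z‖ₑ ^ β) (x - y) :=
          setLIntegral_le_lintegral _ _
      _ = I := by rw [lintegral_sub_left_eq_self, lintegral_indicator measurableSet_ball]
  refine ne_top_of_le_ne_top (b := K ^ 2 * I * volume U)
    (ENNReal.mul_ne_top (by finiteness) hU.measure_lt_top.ne) ?_
  rw [← setLIntegral_const]
  refine setLIntegral_mono' hUm fun x hx ↦ ?_
  calc ∫⁻ y in U, ‖u x - u y‖ₑ ^ 2 / ‖x - y‖ₑ ^ (finrank ℝ E + 2 * s)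
      ≤ ∫⁻ y in U, K ^ 2 * ‖x - y‖ₑ ^ β :=
        lintegral_mono fun y ↦ enorm_sub_sq_div_le_of_lipschitzWith hu _ x y
    _ = K ^ 2 * ∫⁻ y in U, ‖x - y‖ₑ ^ β := lintegral_const_mul' _ _ (by finiteness)
    _ ≤ K ^ 2 * I := by gcongr; exact hinner x hx

lemma integral_gagliardoKernel_eq_toReal {u : E → F} (hu : Continuous u) {s : ℝ} {U : Set E}
    (hfin : gagliardoEnergy s U u ≠ ⊤) :
    ∫ x in U, ∫ y in U, ‖u x - u y‖ ^ 2 / ‖x - y‖ ^ (finrank ℝ E + 2 * s) =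
      (gagliardoEnergy s U u).toReal := by
  set k : E → E → ENNReal := fun x y ↦ ‖u x - u y‖ₑ ^ 2 / ‖x - y‖ₑ ^ (finrank ℝ E + 2 * s)
  have hk : Measurable (Function.uncurry k) := measurable_gagliardoKernel hu s
  have hk_top (x y : E) : k x y < ⊤ := by
    rcases eq_or_ne x y with rfl | hxy
    · simp [k]
    · refine ENNReal.div_lt_top (by finiteness) ?_
      simp [ENNReal.rpow_eq_zero_iff, sub_eq_zero, hxy]
  have hinner (x : E) : ∫ y in U, ‖u x - u y‖ ^ 2 / ‖x - y‖ ^ (finrank ℝ E + 2 * s) =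
      (∫⁻ y in U, k x y).toReal := by
    rw [← integral_toReal hk.of_uncurry_left.aemeasurable (Eventually.of_forall (hk_top x))]
    simp only [k, ENNReal.toReal_div, ENNReal.toReal_pow, ← ENNReal.toReal_rpow, toReal_enorm]
  have hG : Measurable fun x ↦ ∫⁻ y in U, k x y := hk.lintegral_prod_right'
  simp only [hinner]
  exact integral_toReal hG.aemeasurable (ae_lt_top hG hfin)

end FiniteEnergy

lemma gagliardo_eq_mul_toReal_gagliardoEnergy {N : ℕ} {s : ℝ} {U : Set (Euc N)} {u : Euc N → ℝ}
    (hu : Continuous u) (hfin : gagliardoEnergy s U u ≠ ⊤) :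
    gagliardo N s U u = cNs N s / 2 * (gagliardoEnergy s U u).toReal := by
  rw [gagliardo, ← integral_gagliardoKernel_eq_toReal hu hfin]
  simp only [norm_eq_abs, sq_abs, finrank_euclideanSpace_fin]

lemma cNs_pos (N : ℕ) {s : ℝ} (hs0 : 0 < s) (hs1 : s < 1) : 0 < cNs N s := by
  have hnum : 0 < Gamma ((N + 2 * s) / 2) := Gamma_pos_of_pos (by positivity)
  have hden : 0 < Gamma (1 - s) := Gamma_pos_of_pos (by linarith)
  exact div_pos (mul_pos (by positivity) hnum) (mul_pos (by positivity) hden)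

lemma testFun.gagliardoEnergy_ne_top {N : ℕ} [NeZero N] {s : ℝ} (hs : s < 1) {U V : Set (Euc N)}
    {u : Euc N → ℝ} (hu : testFun N V u) (hU : Bornology.IsBounded U) (hUm : MeasurableSet U) :
    gagliardoEnergy s U u ≠ ⊤ := by
  obtain ⟨K, hK⟩ := hu.1.lipschitzWith_of_hasCompactSupport hu.2.1 (by simp)
  exact gagliardoEnergy_ne_top_of_lipschitzWith hK hs hU hUm

theorem statement14_general (N : ℕ) (hN : 2 ≤ N) (s : ℝ) (hs : s ∈ Ioo (1 / 2) 1) :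
    ∃ d : ℝ, 0 < d ∧ ∀ u : Euc N → ℝ, Continuous u → IsRadial N u →
      (∀ x ∉ unitBall N, u x = 0) → gagliardoEnergy s (unitBall N) u ≠ ⊤ → ∀ x ≠ 0,
        u x ^ 2 ≤ d * ‖x‖ ^ (2 * s - N) * gagliardo N s (unitBall N) u := by
  have hN' : (2 : ℝ) ≤ N := by exact_mod_cast hN
  have hsN : s < N / 2 := by linarith [hs.2]
  have hc := cNs_pos N (by linarith [hs.1]) hs.2
  set A := radialHolderConst (Euc N) s / (1 - 2 ^ (s - N / 2))
  have hA : 0 < A := div_pos (radialHolderConst_pos _ hs.1)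
    (sub_pos.2 (rpow_lt_one_of_one_lt_of_neg one_lt_two (sub_neg.2 hsN)))
  refine ⟨2 * A ^ 2 / cNs N s, by positivity, fun u hu hrad hsupp hfin x hx ↦ ?_⟩
  rw [gagliardo_eq_mul_toReal_gagliardoEnergy hu hfin]
  set Q := (gagliardoEnergy s (unitBall N) u).toReal
  have hbound : ‖u x‖ ≤ A * √Q * ‖x‖ ^ (s - N / 2) := by
    have hdecay := norm_le_mul_rpow_of_radial hu hrad hs.1 (by simpa using hsN) hsupp hfin hx
    rw [finrank_euclideanSpace_fin] at hdecay
    exact hdecay.trans_eq (by simp only [A, Q, unitBall]; ring)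
  have hpow : (‖x‖ ^ (s - N / 2)) ^ 2 = ‖x‖ ^ (2 * s - N) := by
    rw [← rpow_mul_natCast (norm_nonneg x)]; push_cast; ring_nf
  calc u x ^ 2 = ‖u x‖ ^ 2 := (sq_abs _).symm
    _ ≤ (A * √Q * ‖x‖ ^ (s - N / 2)) ^ 2 := by gcongr
    _ = A ^ 2 * ‖x‖ ^ (2 * s - N) * Q := by
        rw [mul_pow, mul_pow, hpow, sq_sqrt ENNReal.toReal_nonneg, mul_right_comm]
    _ = 2 * A ^ 2 / cNs N s * ‖x‖ ^ (2 * s - N) * (cNs N s / 2 * Q) := by field_simp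

/-- the radial pointwise bound u(x)² ≤ d·|x|^{2s−N}·Q_{N,s,B}(u). -/
theorem statement14 (N : ℕ) (hN : 2 ≤ N) (s : ℝ) (hs : s ∈ Set.Ioo (1/2 : ℝ) 1) :
    ∃ d : ℝ, 0 < d ∧ ∀ u : Euc N → ℝ, testFun N (unitBall N) u → IsRadial N u →
      ∀ x ∈ unitBall N, x ≠ 0 →
        (u x) ^ 2 ≤ d * ‖x‖ ^ (2 * s - (N : ℝ)) * gagliardo N s (unitBall N) u := by
  have : NeZero N := ⟨by lia⟩
  obtain ⟨d, hd, hbound⟩ := statement14_general N hN s hs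
  exact ⟨d, hd, fun u hu hrad x _ hx ↦ hbound u hu.1.continuous hrad
    (fun y hy ↦ image_eq_zero_of_notMem_tsupport fun hy' ↦ hy (hu.2.2 hy'))
    (hu.gagliardoEnergy_ne_top hs.2 Metric.isBounded_ball measurableSet_ball) x hx⟩
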